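/- In the algebra ⋀V ⊗ End(P), the following commutation relations hold: [τ, Θ₋] = 0, [τ, Θ₊] = 0, and [Θ₊, Θ₋] = 2τ², where [X,Y] := XY − YX. -/

import Mathlib

open Matrix MvPolynomial TensorProduct

noncomputable section

/-- Index set for entries `x_{i,j}` with `i < j`. -/
abbrev Idx (n : ℕ) := {p : Fin n × Fin n // p.1 < p.2}

/-- Polynomial algebra on the space of alternating `n × n` matrices. -/
abbrev P (n : ℕ) := MvPolynomial (Idx n) ℂ

/-- Multiplication operator `M_{i,j}` (with `M_{j,i} = -M_{i,j}`, `M_{i,i} = 0`). -/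
def Mop (n : ℕ) (i j : Fin n) : Module.End ℂ (P n) :=
  if h : i < j then LinearMap.mulLeft ℂ (X ⟨(i, j), h⟩)
  else if h' : j < i then -LinearMap.mulLeft ℂ (X ⟨(j, i), h'⟩ : P n)
  else 0

/-- Derivation `D_{i,j} = ∂/∂x_{i,j}` (with `D_{j,i} = -D_{i,j}`, `D_{i,i} = 0`). -/
def Dop (n : ℕ) (i j : Fin n) : Module.End ℂ (P n) :=
  if h : i < j then ((pderiv ⟨(i, j), h⟩ : Derivation ℂ (P n) (P n)) : P n →ₗ[ℂ] P n)
  else if h' : j < i then -((pderiv ⟨(j, i), h'⟩ : Derivation ℂ (P n) (P n)) : P n →ₗ[ℂ] P n)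
  else 0

/-- `2n`-dimensional vector space with basis indexed by `Fin n ⊕ Fin n`
(`Sum.inl i ↦ e_{i+1}`, `Sum.inr i ↦ e_{-(i+1)}`). -/
abbrev V (n : ℕ) := (Fin n ⊕ Fin n) → ℂ

/-- The tensor product algebra `⋀V ⊗ End(P)`. -/
abbrev ExtEnd (n : ℕ) := ExteriorAlgebra ℂ (V n) ⊗[ℂ] Module.End ℂ (P n)

/-- The basis vectors `e_i` in the exterior algebra. -/
def e (n : ℕ) (v : Fin n ⊕ Fin n) : ExteriorAlgebra ℂ (V n) :=
  ExteriorAlgebra.ι ℂ (Pi.single v 1)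

/-- `τ = Σ_i e_i e_{−i} ⊗ 1`. -/
def tau (n : ℕ) : ExtEnd n := ∑ i : Fin n, (e n (.inl i) * e n (.inr i)) ⊗ₜ[ℂ] 1

/-- `Θ₋ = Σ_{i,j} e_i e_j ⊗ M_{i,j}`. -/
def ThetaMinus (n : ℕ) : ExtEnd n :=
  ∑ i : Fin n, ∑ j : Fin n, (e n (.inl i) * e n (.inl j)) ⊗ₜ[ℂ] Mop n i j

/-- `Θ₊ = Σ_{i,j} e_{−j} e_{−i} ⊗ D_{i,j}`. -/
def ThetaPlus (n : ℕ) : ExtEnd n :=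
  ∑ i : Fin n, ∑ j : Fin n, (e n (.inr j) * e n (.inr i)) ⊗ₜ[ℂ] Dop n i j

/-!
A product of two vectors of `⋀V` is central, so `τ` commutes with everything. For the third
relation, fold the double sums over `i < j`: with `ω_p = e_i e_j` and `θ_p = e_{-j} e_{-i}` for
`p = (i, j)`, this gives `Θ₋ = 2 ∑ ω_p ⊗ x_p` and `Θ₊ = 2 ∑ θ_p ⊗ ∂_p`. As the `θ_p` and `ω_q`
commute and `[∂_p, x_q] = δ_{p,q}`, we get `[Θ₊, Θ₋] = 4 ∑ θ_p ω_p ⊗ 1`. Finally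
`θ_p ω_p = (e_i e_{-i}) (e_j e_{-j})`, and folding `τ²` in the same way gives
`τ² = 2 ∑ θ_p ω_p ⊗ 1`.
-/

section ExteriorAlgebra

variable {R M : Type*} [CommRing R] [AddCommGroup M] [Module R M]

open ExteriorAlgebra (ι)

theorem ι_mul_ι_swap (x y : M) : ι R x * ι R y = -(ι R y * ι R x) :=
  eq_neg_of_add_eq_zero_left (ExteriorAlgebra.ι_add_mul_swap x y)

theorem commute_ι_mul_ι (x y : M) (a : ExteriorAlgebra R M) : Commute (ι R x * ι R y) a := by
  induction a using ExteriorAlgebra.induction with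
  | algebraMap r => exact Algebra.commute_algebraMap_right r _
  | ι z =>
    calc ι R x * ι R y * ι R z = -(ι R x * ι R z * ι R y) := by
          rw [mul_assoc, ι_mul_ι_swap y z, mul_neg, mul_assoc]
      _ = ι R z * (ι R x * ι R y) := by
          rw [ι_mul_ι_swap x z, neg_mul, neg_neg, mul_assoc]
  | mul a b ha hb => exact ha.mul_right hb
  | add a b ha hb => exact ha.add_right hb

theorem ι_mul_ι_mul_self (x y : M) : ι R x * ι R y * (ι R x * ι R y) = 0 := by
  rw [← mul_assoc, (commute_ι_mul_ι x y (ι R x)).eq, ← mul_assoc, ExteriorAlgebra.ι_sq_zero,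
    zero_mul, zero_mul]

theorem ι_mul_ι_mul_ι_mul_ι_comm (x x' y y' : M) :
    ι R y' * ι R x' * (ι R x * ι R y) = ι R x * ι R x' * (ι R y * ι R y') :=
  calc ι R y' * ι R x' * (ι R x * ι R y)
    _ = ι R y' * (ι R x' * ι R x) * ι R y := by simp only [mul_assoc]
    _ = ι R x' * ι R x * (ι R y' * ι R y) := by
      rw [← (commute_ι_mul_ι x' x (ι R y')).eq, mul_assoc]
    _ = ι R x * ι R x' * (ι R y * ι R y') := by
      rw [ι_mul_ι_swap x' x, ι_mul_ι_swap y' y, neg_mul_neg]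

end ExteriorAlgebra

theorem nsmul_lie_nsmul {S : Type*} [NonUnitalNonAssocRing S] (m n : ℕ) (x y : S) :
    ⁅m • x, n • y⁆ = (m * n) • ⁅x, y⁆ := by
  rw [Ring.lie_def, Ring.lie_def, smul_mul_smul_comm, smul_mul_smul_comm, mul_comm n m, smul_sub]

theorem commute_tmul_one_of_forall_commute {R A B : Type*} [CommSemiring R]
    [Semiring A] [Algebra R A] [Semiring B] [Algebra R B] {a : A}
    (ha : ∀ a', Commute a a') (x : A ⊗[R] B) :
    Commute (a ⊗ₜ[R] (1 : B)) x := by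
  induction x with
  | zero => exact Commute.zero_right _
  | tmul a' b => exact (ha a').tmul (Commute.one_left b)
  | add x y hx hy => exact hx.add_right hy

section TensorProduct

variable {R A B : Type*} [CommRing R] [Ring A] [Algebra R A] [Ring B] [Algebra R B]

theorem lie_tmul_tmul_of_commute {a a' : A} (h : Commute a a') (b b' : B) :
    ⁅a ⊗ₜ[R] b, a' ⊗ₜ[R] b'⁆ = (a * a') ⊗ₜ[R] ⁅b, b'⁆ := by
  rw [Ring.lie_def, Ring.lie_def, Algebra.TensorProduct.tmul_mul_tmul,
    Algebra.TensorProduct.tmul_mul_tmul, ← h.eq, tmul_sub]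

theorem lie_sum_tmul_sum_tmul {κ : Type*} [Fintype κ] [DecidableEq κ] {a a' : κ → A}
    {b b' : κ → B} (ha : ∀ p q, Commute (a p) (a' q))
    (hb : ∀ p q, ⁅b p, b' q⁆ = if p = q then 1 else 0) :
    ⁅∑ p, a p ⊗ₜ[R] b p, ∑ q, a' q ⊗ₜ[R] b' q⁆ = ∑ p, (a p * a' p) ⊗ₜ[R] (1 : B) := by
  simp_rw [Ring.lie_def, Finset.sum_mul_sum]
  rw [Finset.sum_comm (f := fun q p => a' q ⊗ₜ[R] b' q * a p ⊗ₜ[R] b p)]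
  simp only [← Finset.sum_sub_distrib, ← Ring.lie_def, lie_tmul_tmul_of_commute (ha _ _), hb,
    tmul_ite, Finset.sum_ite_eq, Finset.mem_univ, if_true]

end TensorProduct

theorem lie_derivation_mulLeft {R A : Type*} [CommRing R] [CommRing A] [Algebra R A]
    (D : Derivation R A A) (a : A) :
    ⁅(D : Module.End R A), LinearMap.mulLeft R a⁆ = LinearMap.mulLeft R (D a) := by
  ext f
  simp [Ring.lie_def, mul_comm]

theorem lie_pderiv_mulLeft_X {R σ : Type*} [CommRing R] [DecidableEq σ] (p q : σ) :
    ⁅((pderiv p : Derivation R (MvPolynomial σ R) (MvPolynomial σ R)) :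
        Module.End R (MvPolynomial σ R)), LinearMap.mulLeft R (X q : MvPolynomial σ R)⁆ =
      if p = q then 1 else 0 := by
  rw [lie_derivation_mulLeft]
  rcases eq_or_ne p q with rfl | h
  · rw [pderiv_X_self, LinearMap.mulLeft_one, if_pos rfl, Module.End.one_eq_id]
  · rw [pderiv_X_of_ne h.symm, LinearMap.mulLeft_zero_eq_zero, if_neg h]

theorem sum_sum_eq_two_nsmul_sum_lt {ι M : Type*} [Fintype ι] [LinearOrder ι] [AddCommMonoid M]
    {f : ι → ι → M} (hsymm : ∀ i j, f i j = f j i) (hdiag : ∀ i, f i i = 0) :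
    ∑ i, ∑ j, f i j = 2 • ∑ p : {p : ι × ι // p.1 < p.2}, f p.1.1 p.1.2 := by
  have hsplit (p : ι × ι) : f p.1 p.2 =
      (if p.1 < p.2 then f p.1 p.2 else 0) + if p.2 < p.1 then f p.2 p.1 else 0 := by
    obtain ⟨i, j⟩ := p
    rcases lt_trichotomy i j with h | rfl | h
    · simp [h, h.not_gt]
    · simp [hdiag]
    · simp [h, h.not_gt, hsymm i j]
  have hlt : ∑ p : ι × ι, (if p.1 < p.2 then f p.1 p.2 else 0) =
      ∑ p : {p : ι × ι // p.1 < p.2}, f p.1.1 p.1.2 := by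
    rw [← Finset.sum_filter, Finset.sum_subtype _ (fun _ => Finset.mem_filter_univ _)]
  have hgt : ∑ p : ι × ι, (if p.2 < p.1 then f p.2 p.1 else 0) =
      ∑ p : ι × ι, if p.1 < p.2 then f p.1 p.2 else 0 :=
    (Equiv.prodComm ι ι).sum_comp fun p => if p.1 < p.2 then f p.1 p.2 else 0
  rw [← Fintype.sum_prod_type', Fintype.sum_congr _ _ hsplit, Finset.sum_add_distrib, hgt, hlt,
    two_nsmul]

section Theta

variable {n : ℕ}

theorem Mop_swap (i j : Fin n) : Mop n i j = -Mop n j i := by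
  rcases lt_trichotomy i j with h | rfl | h <;> simp [Mop, *, not_lt_of_gt]

theorem Dop_swap (i j : Fin n) : Dop n i j = -Dop n j i := by
  rcases lt_trichotomy i j with h | rfl | h <;> simp [Dop, *, not_lt_of_gt]

theorem Mop_self (i : Fin n) : Mop n i i = 0 := by simp [Mop]

theorem Dop_self (i : Fin n) : Dop n i i = 0 := by simp [Dop]

theorem lie_Dop_Mop (p q : Idx n) :
    ⁅Dop n p.1.1 p.1.2, Mop n q.1.1 q.1.2⁆ = if p = q then 1 else 0 := by
  rw [Dop, Mop, dif_pos p.2, dif_pos q.2]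
  exact lie_pderiv_mulLeft_X p q

theorem e_mul_e_swap (u v : Fin n ⊕ Fin n) : e n u * e n v = -(e n v * e n u) :=
  ι_mul_ι_swap _ _

theorem commute_e_mul_e (u v : Fin n ⊕ Fin n) (a : ExteriorAlgebra ℂ (V n)) :
    Commute (e n u * e n v) a :=
  commute_ι_mul_ι _ _ a

theorem ThetaMinus_eq :
    ThetaMinus n = 2 • ∑ p : Idx n,
      (e n (.inl p.1.1) * e n (.inl p.1.2)) ⊗ₜ[ℂ] Mop n p.1.1 p.1.2 := by
  refine sum_sum_eq_two_nsmul_sum_lt (fun i j => ?_) fun i => ?_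
  · rw [e_mul_e_swap, Mop_swap, neg_tmul, tmul_neg, neg_neg]
  · rw [Mop_self, tmul_zero]

theorem ThetaPlus_eq :
    ThetaPlus n = 2 • ∑ p : Idx n,
      (e n (.inr p.1.2) * e n (.inr p.1.1)) ⊗ₜ[ℂ] Dop n p.1.1 p.1.2 := by
  refine sum_sum_eq_two_nsmul_sum_lt (fun i j => ?_) fun i => ?_
  · rw [e_mul_e_swap, Dop_swap, neg_tmul, tmul_neg, neg_neg]
  · rw [Dop_self, tmul_zero]

theorem tau_sq_eq :
    tau n ^ 2 = 2 • ∑ p : Idx n,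
      (e n (.inl p.1.1) * e n (.inr p.1.1) *
        (e n (.inl p.1.2) * e n (.inr p.1.2))) ⊗ₜ[ℂ] 1 := by
  rw [sq, tau, Finset.sum_mul_sum]
  simp only [Algebra.TensorProduct.tmul_mul_tmul, one_mul]
  refine sum_sum_eq_two_nsmul_sum_lt (fun i j => ?_) fun i => ?_
  · rw [(commute_e_mul_e _ _ _).eq]
  · rw [e, e, ι_mul_ι_mul_self, zero_tmul]

theorem commute_tau (x : ExtEnd n) : Commute (tau n) x :=
  Commute.sum_left _ _ _ fun _ _ =>
    commute_tmul_one_of_forall_commute (commute_e_mul_e _ _) x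

theorem lie_ThetaPlus_ThetaMinus : ⁅ThetaPlus n, ThetaMinus n⁆ = 2 * tau n ^ 2 :=
  calc ⁅ThetaPlus n, ThetaMinus n⁆
      = (2 * 2) • ∑ p : Idx n, (e n (.inr p.1.2) * e n (.inr p.1.1) *
          (e n (.inl p.1.1) * e n (.inl p.1.2))) ⊗ₜ[ℂ] 1 := by
        rw [ThetaPlus_eq, ThetaMinus_eq, nsmul_lie_nsmul,
          lie_sum_tmul_sum_tmul (fun _ _ => commute_e_mul_e _ _ _) lie_Dop_Mop]
    _ = (2 * 2) • ∑ p : Idx n, (e n (.inl p.1.1) * e n (.inr p.1.1) *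
          (e n (.inl p.1.2) * e n (.inr p.1.2))) ⊗ₜ[ℂ] 1 := by
        simp only [e, ι_mul_ι_mul_ι_mul_ι_comm]
    _ = 2 * tau n ^ 2 := by
        rw [tau_sq_eq, mul_smul, two_nsmul (2 • _), ← two_mul]

end Theta

/-- Commutation relations: `[τ, Θ₋] = 0`, `[τ, Θ₊] = 0`, `[Θ₊, Θ₋] = 2τ²`. -/
theorem commutation_relations (n : ℕ) (hn : 1 ≤ n) :
    tau n * ThetaMinus n - ThetaMinus n * tau n = 0 ∧
    tau n * ThetaPlus n - ThetaPlus n * tau n = 0 ∧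
    ThetaPlus n * ThetaMinus n - ThetaMinus n * ThetaPlus n = 2 * tau n ^ 2 := by
  refine ⟨?_, ?_, ?_⟩
  · rw [(commute_tau _).eq, sub_self]
  · rw [(commute_tau _).eq, sub_self]
  · exact lie_ThetaPlus_ThetaMinus

end
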